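/- For each integer n ≥ 1, the Rudin-Shapiro sequence has a nonempty factor whose least period is exactly n. -/

import Mathlib

/-- `n` is a period of the factor `x[i..j]` of the infinite word `x`:
`x t = x (t+n)` for all `i ≤ t ≤ j - n`. -/
def Period {A : Type*} (x : ℕ → A) (i j n : ℕ) : Prop :=
  ∀ t, i ≤ t → t + n ≤ j → x t = x (t + n)

/-- `n` is a least period of `x`: some nonempty factor `x[i..j]` has
minimal period `n`. -/
def LeastPeriod {A : Type*} (x : ℕ → A) (n : ℕ) : Prop :=
  ∃ i j, i ≤ j ∧ Period x i j n ∧ ∀ m, 0 < m → m < n → ¬ Period x i j m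

/-- The Rudin-Shapiro sequence: number of (possibly overlapping) occurrences
of `11` in the binary expansion of `n`, mod 2. -/
def rudinShapiro (n : ℕ) : ℕ :=
  (((Nat.digits 2 n).zip (Nat.digits 2 n).tail).countP
    (fun p => p.1 == 1 && p.2 == 1)) % 2

/-!
It suffices to find an unbordered factor of every length `n ≥ 1`. Since `r (4 * t) = r t`, a period
`4 * m` of a factor restricts to a period `m` of the factor obtained by reading every fourth term,
and an overlap of nine letters forces the shift to be a multiple of `4`. Hence, if `r[i..j]` is
unbordered, a border of a factor slightly extending `r[4 * i..4 * j]` has at most eight letters.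
Such short borders are excluded by controlling the letters next to the two ends, and these
conditions propagate under `(i, j) ↦ (4 * i - a, 4 * j + b)` for suitable `a < 2` and `b < 4`, which
lets a strong induction on the length run.
-/

section Period

variable {A : Type*} {x : ℕ → A} {i j : ℕ}

/-- The factor `x[i..j]` is unbordered: it has no period shorter than its length. -/
def Unbordered (x : ℕ → A) (i j : ℕ) : Prop :=
  ∀ m, 0 < m → i + m ≤ j → ¬ Period x i j m

instance [DecidableEq A] (n : ℕ) : Decidable (Period x i j n) :=
  decidable_of_iff (∀ t < j + 1, i ≤ t → t + n ≤ j → x t = x (t + n))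
    ⟨fun h t hit htj => h t (by omega) hit htj, fun h t _ => h t⟩

instance [DecidableEq A] : Decidable (Unbordered x i j) :=
  decidable_of_iff (∀ m < j + 1, 0 < m → i + m ≤ j → ¬ Period x i j m)
    ⟨fun h m hm him => h m (by omega) hm him, fun h m _ => h m⟩

theorem Unbordered.leastPeriod {n : ℕ} (h : Unbordered x i j) (hij : i ≤ j) (hn : j + 1 = i + n) :
    LeastPeriod x n :=
  ⟨i, j, hij, fun t _ _ => by omega, fun m hm hmn => h m hm (by omega)⟩

theorem Period.of_dilation {k m i' j' : ℕ} (hx : ∀ n, x (k * n) = x n)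
    (h : Period x i' j' (k * m)) (hi : i' ≤ k * i) (hj : k * j ≤ j') : Period x i j m := by
  intro t hit htj
  have hdil : x (k * t) = x (k * t + k * m) :=
    h (k * t) (hi.trans (Nat.mul_le_mul_left k hit))
      (by rw [← mul_add]; exact (Nat.mul_le_mul_left k htj).trans hj)
  rwa [← mul_add, hx, hx] at hdil

theorem Period.eq_succ_iff {m t : ℕ} (h : Period x i j m) (hit : i ≤ t) (htj : t + m + 1 ≤ j) :
    x t = x (t + 1) ↔ x (t + m) = x (t + m + 1) := by
  rw [h t hit (by omega), h (t + 1) (by omega) (by omega), add_right_comm]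

/-- The factor `x[s..e]` begins with `w`, `?w`, `??vw` or `???vw`, where `?` stands for any letter
and `v`, `w` for letters other than `u`. A border is impossible when the suffix of its length shows
one of these patterns and the prefix, for the same `u`, does not. -/
def Deviates (x : ℕ → A) (u : A) (s e : ℕ) : Prop :=
  (s ≤ e ∧ x s ≠ u) ∨ (s + 1 ≤ e ∧ x (s + 1) ≠ u) ∨
    (s + 3 ≤ e ∧ x (s + 2) ≠ u ∧ x (s + 3) ≠ u) ∨ (s + 4 ≤ e ∧ x (s + 3) ≠ u ∧ x (s + 4) ≠ u)

theorem Deviates.of_period {m : ℕ} {u : A} (h : Period x i j m) (hd : Deviates x u (i + m) j) :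
    Deviates x u i j := by
  have hshift (t : ℕ) (ht : i + m + t ≤ j) : x (i + m + t) = x (i + t) := by
    rw [h (i + t) (by omega) (by omega), add_right_comm]
  rcases hd with ⟨hle, hne⟩ | ⟨hle, hne⟩ | ⟨hle, hne, hne'⟩ | ⟨hle, hne, hne'⟩
  · exact .inl ⟨by omega, by rwa [← add_zero i, ← hshift 0 hle]⟩
  · exact .inr (.inl ⟨by omega, by rwa [← hshift 1 hle]⟩)
  · exact .inr (.inr (.inl ⟨by omega, by rwa [← hshift 2 (by omega)], by rwa [← hshift 3 hle]⟩))
  · exact .inr (.inr (.inr ⟨by omega, by rwa [← hshift 3 (by omega)], by rwa [← hshift 4 hle]⟩))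

end Period

theorem rudinShapiro_lt_two (n : ℕ) : rudinShapiro n < 2 :=
  Nat.mod_lt _ two_pos

theorem rudinShapiro_two_mul_add (n : ℕ) {d : ℕ} (hd : d < 2) :
    rudinShapiro (2 * n + d) = (rudinShapiro n + d * n) % 2 := by
  rcases Nat.eq_zero_or_pos n with rfl | hn
  · interval_cases d <;> simp [rudinShapiro]
  · have hcons : Nat.digits 2 (2 * n + d) = d :: Nat.digits 2 n := by
      rw [add_comm, Nat.digits_add 2 one_lt_two d n hd (.inr hn.ne')]
    have htail : Nat.digits 2 n = n % 2 :: Nat.digits 2 (n / 2) :=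
      Nat.digits_def' one_lt_two hn
    have hpair : (d == 1 && n % 2 == 1) = decide (d * n % 2 = 1) := by
      rcases Nat.mod_two_eq_zero_or_one n with h | h <;> interval_cases d <;> simp [h]
    simp only [rudinShapiro, hcons, List.tail_cons]
    rw [htail, List.zip_cons_cons, List.countP_cons, List.tail_cons, hpair]
    simp only [decide_eq_true_eq]
    split_ifs <;> omega

theorem rudinShapiro_two_mul (n : ℕ) : rudinShapiro (2 * n) = rudinShapiro n := by
  have h := rudinShapiro_two_mul_add n two_pos
  rwa [zero_mul, add_zero, add_zero, Nat.mod_eq_of_lt (rudinShapiro_lt_two n)] at h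

theorem rudinShapiro_two_mul_add_one (n : ℕ) :
    rudinShapiro (2 * n + 1) = (rudinShapiro n + n) % 2 := by
  rw [rudinShapiro_two_mul_add n one_lt_two, one_mul]

theorem rudinShapiro_four_mul (n : ℕ) : rudinShapiro (4 * n) = rudinShapiro n := by
  rw [show 4 * n = 2 * (2 * n) by ring, rudinShapiro_two_mul, rudinShapiro_two_mul]

theorem rudinShapiro_four_mul_add_one (n : ℕ) : rudinShapiro (4 * n + 1) = rudinShapiro n := by
  have h := rudinShapiro_two_mul_add_one (2 * n)
  rw [rudinShapiro_two_mul, show 2 * (2 * n) = 4 * n by ring] at h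
  have := rudinShapiro_lt_two n
  omega

theorem rudinShapiro_four_mul_add_two (n : ℕ) :
    rudinShapiro (4 * n + 2) = (rudinShapiro n + n) % 2 := by
  rw [show 4 * n + 2 = 2 * (2 * n + 1) by ring, rudinShapiro_two_mul, rudinShapiro_two_mul_add_one]

theorem rudinShapiro_four_mul_add_three (n : ℕ) :
    rudinShapiro (4 * n + 3) = (rudinShapiro n + n + 1) % 2 := by
  have h := rudinShapiro_two_mul_add_one (2 * n + 1)
  rw [show 2 * (2 * n + 1) + 1 = 4 * n + 3 by ring, rudinShapiro_two_mul_add_one] at h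
  omega

theorem rudinShapiro_four_mul_add_of_parity {b n : ℕ} (hb : b < 4) (hbn : b = 3 ↔ ¬ 2 ∣ n) :
    rudinShapiro (4 * n + b) = rudinShapiro n := by
  have := rudinShapiro_lt_two n
  have := rudinShapiro_four_mul_add_two n
  have := rudinShapiro_four_mul_add_three n
  interval_cases b
  · exact rudinShapiro_four_mul n
  · exact rudinShapiro_four_mul_add_one n
  all_goals omega

theorem rudinShapiro_two_mul_eq_succ_iff (n : ℕ) :
    rudinShapiro (2 * n) = rudinShapiro (2 * n + 1) ↔ 2 ∣ n := by
  rw [rudinShapiro_two_mul, rudinShapiro_two_mul_add_one]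
  have := rudinShapiro_lt_two n
  omega

theorem rudinShapiro_four_mul_add_one_eq_succ_iff (n : ℕ) :
    rudinShapiro (4 * n + 1) = rudinShapiro (4 * n + 2) ↔ 2 ∣ n := by
  rw [rudinShapiro_four_mul_add_one, rudinShapiro_four_mul_add_two]
  have := rudinShapiro_lt_two n
  omega

/- Whether two consecutive terms agree alternates along the even positions, so a shift
`m ≡ 2 (mod 4)` is impossible. It also differs between the positions `4 * n + 1` and `4 * n + 5`,
which an odd shift would send to even positions at distance `4`. -/
theorem Period.four_dvd {i j m : ℕ} (h : Period rudinShapiro i j m) (hlong : i + m + 8 ≤ j) :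
    4 ∣ m := by
  rcases Nat.even_or_odd' m with ⟨k, rfl | rfl⟩
  · obtain ⟨n, hn⟩ : ∃ n, i ≤ 2 * n ∧ 2 * n ≤ i + 1 := ⟨(i + 1) / 2, by omega⟩
    have hshift := h.eq_succ_iff hn.1 (by omega)
    rw [← mul_add, rudinShapiro_two_mul_eq_succ_iff, rudinShapiro_two_mul_eq_succ_iff] at hshift
    omega
  · obtain ⟨n, hn⟩ : ∃ n, i ≤ 4 * n + 1 ∧ 4 * n + 1 ≤ i + 3 := ⟨(i + 2) / 4, by omega⟩
    have hfirst := h.eq_succ_iff hn.1 (by omega)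
    have hsecond := h.eq_succ_iff (t := 4 * (n + 1) + 1) (by omega) (by omega)
    rw [show 4 * n + 1 + (2 * k + 1) = 2 * (2 * n + k + 1) by ring,
      rudinShapiro_four_mul_add_one_eq_succ_iff, rudinShapiro_two_mul_eq_succ_iff] at hfirst
    rw [show 4 * (n + 1) + 1 + (2 * k + 1) = 2 * (2 * n + k + 3) by ring,
      rudinShapiro_four_mul_add_one_eq_succ_iff, rudinShapiro_two_mul_eq_succ_iff] at hsecond
    omega

/-- An unbordered factor `r[i..j]` of the Rudin-Shapiro sequence together with conditions on the
letters next to its ends under which `r[4 * i - a..4 * j + b]` is again unbordered and satisfies the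
same conditions, for `a < 2` and for those `b < 4` allowed by the parity of `j`. -/
structure Extendable (i j : ℕ) : Prop where
  pos : 0 < i
  lt : i < j
  unbordered : Unbordered rudinShapiro i j
  left_pred : rudinShapiro (i - 1) = (rudinShapiro i + i) % 2
  left_succ : rudinShapiro (i + 1) = rudinShapiro i
  right_ne : rudinShapiro j ≠ rudinShapiro i
  right_pred : 2 ∣ j → rudinShapiro (j - 1) = rudinShapiro j

instance (i j : ℕ) : Decidable (Extendable i j) :=
  decidable_of_iff (0 < i ∧ i < j ∧ Unbordered rudinShapiro i j ∧
      rudinShapiro (i - 1) = (rudinShapiro i + i) % 2 ∧ rudinShapiro (i + 1) = rudinShapiro i ∧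
      rudinShapiro j ≠ rudinShapiro i ∧ (2 ∣ j → rudinShapiro (j - 1) = rudinShapiro j))
    ⟨fun ⟨h₁, h₂, h₃, h₄, h₅, h₆, h₇⟩ => ⟨h₁, h₂, h₃, h₄, h₅, h₆, h₇⟩,
      fun ⟨h₁, h₂, h₃, h₄, h₅, h₆, h₇⟩ => ⟨h₁, h₂, h₃, h₄, h₅, h₆, h₇⟩⟩

namespace Extendable

variable {i j a b : ℕ}

theorem left_boundary (h : Extendable i j) : rudinShapiro (4 * i - 1) = rudinShapiro i := by
  obtain ⟨k, rfl⟩ : ∃ k, i = k + 1 := ⟨i - 1, by have := h.pos; omega⟩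
  have hpred := h.left_pred
  rw [Nat.add_sub_cancel] at hpred
  have hlast := rudinShapiro_four_mul_add_three k
  have := rudinShapiro_lt_two (k + 1)
  rw [show 4 * (k + 1) - 1 = 4 * k + 3 by omega]
  omega

/- Write `u` for `r i` and `w` for the other letter. The extended factor starts with `uuuwu`,
`uuwuu`, `uuuuw` or `uuuwu`, according to the value of `a` and the parity of `i`. -/
theorem not_deviates_left (h : Extendable i j) (ha : a < 2) (e : ℕ) :
    ¬ Deviates rudinShapiro (rudinShapiro i) (4 * i - a) e := by
  have := rudinShapiro_lt_two i
  have h₀ := rudinShapiro_four_mul i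
  have h₁ := rudinShapiro_four_mul_add_one i
  have h₂ := rudinShapiro_four_mul_add_two i
  have h₃ := rudinShapiro_four_mul_add_three i
  have h₄ : rudinShapiro (4 * i + 4) = rudinShapiro i :=
    (rudinShapiro_four_mul (i + 1)).trans h.left_succ
  unfold Deviates
  interval_cases a
  · rw [Nat.sub_zero]
    omega
  · have hshift (t : ℕ) : 4 * i - 1 + (t + 1) = 4 * i + t := by have := h.pos; omega
    rw [hshift 0, hshift 1, hshift 2, hshift 3, h.left_boundary, add_zero]
    omega

/- The last letters are `wwuww`, `wwuwww` or `wwuwwww`, preceded by one of `uuw` and `wwu`. -/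
theorem deviates_right_of_even (h : Extendable i j) (hj : 2 ∣ j) (hb : b < 3) {s : ℕ}
    (hs : s ≤ 4 * j + b) (hshort : 4 * j + b ≤ s + 7) :
    Deviates rudinShapiro (rudinShapiro i) s (4 * j + b) := by
  obtain ⟨k, rfl⟩ : ∃ k, j = k + 2 := ⟨j - 2, by have := h.pos; have := h.lt; omega⟩
  have hpred : rudinShapiro (k + 1) = rudinShapiro (k + 2) := h.right_pred hj
  have hne := h.right_ne
  obtain ⟨r, rfl⟩ : ∃ r, s = 4 * k + r := ⟨s - 4 * k, by omega⟩
  obtain ⟨hr₁, hr₂⟩ : 1 ≤ r ∧ r ≤ 10 := by omega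
  unfold Deviates
  interval_cases r <;>
    grind only [rudinShapiro_lt_two i, rudinShapiro_lt_two (k + 2),
      rudinShapiro_four_mul_add_two k, rudinShapiro_four_mul_add_three k,
      rudinShapiro_four_mul (k + 1), rudinShapiro_four_mul_add_one (k + 1),
      rudinShapiro_four_mul_add_three (k + 1), rudinShapiro_four_mul (k + 2),
      rudinShapiro_four_mul_add_one (k + 2), rudinShapiro_four_mul_add_two (k + 2)]

/- The last eight letters are `wwwuwwuw` or `uuuwwwuw`. -/
theorem deviates_right_of_odd (h : Extendable i j) (hj : ¬ 2 ∣ j) {s : ℕ}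
    (hs : s ≤ 4 * j + 3) (hshort : 4 * j + 3 ≤ s + 7) :
    Deviates rudinShapiro (rudinShapiro i) s (4 * j + 3) := by
  obtain ⟨k, rfl⟩ : ∃ k, j = k + 1 := ⟨j - 1, by have := h.lt; omega⟩
  have hne := h.right_ne
  obtain ⟨r, rfl⟩ : ∃ r, s = 4 * k + r := ⟨s - 4 * k, by omega⟩
  have hr : r ≤ 7 := by omega
  unfold Deviates
  interval_cases r <;>
    grind only [rudinShapiro_lt_two i, rudinShapiro_lt_two k, rudinShapiro_lt_two (k + 1),
      rudinShapiro_four_mul k, rudinShapiro_four_mul_add_one k,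
      rudinShapiro_four_mul_add_two k, rudinShapiro_four_mul_add_three k,
      rudinShapiro_four_mul (k + 1), rudinShapiro_four_mul_add_one (k + 1),
      rudinShapiro_four_mul_add_three (k + 1)]

theorem deviates_right (h : Extendable i j) (hb : b < 4) (hbj : b = 3 ↔ ¬ 2 ∣ j) {s : ℕ}
    (hs : s ≤ 4 * j + b) (hshort : 4 * j + b ≤ s + 7) :
    Deviates rudinShapiro (rudinShapiro i) s (4 * j + b) := by
  by_cases hj : 2 ∣ j
  · exact h.deviates_right_of_even hj (by omega) hs hshort
  · obtain rfl := hbj.mpr hj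
    exact h.deviates_right_of_odd hj hs hshort

theorem unbordered_extension (h : Extendable i j) (ha : a < 2) (hb : b < 4)
    (hbj : b = 3 ↔ ¬ 2 ∣ j) : Unbordered rudinShapiro (4 * i - a) (4 * j + b) := by
  intro m hm hmj hperiod
  by_cases hlong : 4 * i - a + m + 8 ≤ 4 * j + b
  · obtain ⟨k, rfl⟩ := hperiod.four_dvd hlong
    exact h.unbordered k (by omega) (by omega)
      (hperiod.of_dilation rudinShapiro_four_mul (by omega) (by omega))
  · have hright := h.deviates_right hb hbj hmj (by omega)
    exact h.not_deviates_left ha _ (hright.of_period hperiod)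

theorem left_letter (h : Extendable i j) (ha : a < 2) :
    rudinShapiro (4 * i - a) = rudinShapiro i := by
  interval_cases a
  exacts [rudinShapiro_four_mul i, h.left_boundary]

theorem left_pred_extension (h : Extendable i j) (ha : a < 2) :
    rudinShapiro (4 * i - a - 1) = (rudinShapiro (4 * i - a) + (4 * i - a)) % 2 := by
  have hpos := h.pos
  have := rudinShapiro_lt_two i
  rw [h.left_letter ha]
  interval_cases a
  · rw [Nat.sub_zero, h.left_boundary]
    omega
  · have hboundary := h.left_boundary
    obtain ⟨k, rfl⟩ : ∃ k, i = k + 1 := ⟨i - 1, by omega⟩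
    rw [show 4 * (k + 1) - 1 = 4 * k + 3 by omega, rudinShapiro_four_mul_add_three] at hboundary
    rw [show 4 * (k + 1) - 1 - 1 = 4 * k + 2 by omega, rudinShapiro_four_mul_add_two]
    omega

theorem left_succ_extension (h : Extendable i j) (ha : a < 2) :
    rudinShapiro (4 * i - a + 1) = rudinShapiro (4 * i - a) := by
  rw [h.left_letter ha]
  interval_cases a
  · exact rudinShapiro_four_mul_add_one i
  · rw [Nat.sub_add_cancel (by have := h.pos; omega), rudinShapiro_four_mul]

theorem right_pred_extension (h : Extendable i j) (hb : b < 4) (hbj : b = 3 ↔ ¬ 2 ∣ j)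
    (hdvd : 2 ∣ 4 * j + b) : rudinShapiro (4 * j + b - 1) = rudinShapiro (4 * j + b) := by
  rw [rudinShapiro_four_mul_add_of_parity hb hbj]
  obtain ⟨k, rfl⟩ : ∃ k, j = k + 1 := ⟨j - 1, by have := h.lt; omega⟩
  obtain rfl | rfl : b = 0 ∨ b = 2 := by omega
  · have hpred : rudinShapiro k = rudinShapiro (k + 1) := h.right_pred (by omega)
    have := rudinShapiro_lt_two k
    rw [show 4 * (k + 1) + 0 - 1 = 4 * k + 3 by omega, rudinShapiro_four_mul_add_three]
    omega
  · exact rudinShapiro_four_mul_add_one (k + 1)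

theorem extension (h : Extendable i j) (ha : a < 2) (hb : b < 4) (hbj : b = 3 ↔ ¬ 2 ∣ j) :
    Extendable (4 * i - a) (4 * j + b) where
  pos := by have := h.pos; omega
  lt := by have := h.lt; omega
  unbordered := h.unbordered_extension ha hb hbj
  left_pred := h.left_pred_extension ha
  left_succ := h.left_succ_extension ha
  right_ne := by
    rw [h.left_letter ha, rudinShapiro_four_mul_add_of_parity hb hbj]
    exact h.right_ne
  right_pred := h.right_pred_extension hb hbj

end Extendable

/-- Some extendable factor has length `n` and starts at a position of parity `p`. The parity is
prescribed because the induction on the length has to choose the parity of the right end. -/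
def HasExtendable (n p : ℕ) : Prop :=
  ∃ i j, i % 2 = p ∧ j + 1 = i + n ∧ Extendable i j

theorem hasExtendable_of_lt {n p : ℕ} (hn : 5 ≤ n) (hn' : n < 20) (hp : p < 2) :
    HasExtendable n p := by
  have hsearch : ∀ n < 20, 5 ≤ n → ∀ p < 2, ∃ k ∈ [2, 3, 8, 10, 11],
      Extendable (4 * k - p) (4 * k - p + n - 1) := by
    decide +kernel
  obtain ⟨k, -, hext⟩ := hsearch n hn' hn p hp
  have := hext.pos
  exact ⟨4 * k - p, _, by omega, by omega, hext⟩

theorem hasExtendable_of_div_four {n p : ℕ} (hp : p < 2)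
    (ih : ∀ k, n / 4 ≤ k → k ≤ n / 4 + 1 → ∀ q < 2, HasExtendable k q) : HasExtendable n p := by
  -- From length `k`, the extension to `r[4 * i - p..4 * j + b]` has length `4 * k - 3 + p + b`.
  obtain ⟨k, b, hk, hk', hb, hlength⟩ :
      ∃ k b, n / 4 ≤ k ∧ k ≤ n / 4 + 1 ∧ b < 4 ∧ n + 3 = 4 * k + p + b :=
    ⟨(n + 3 - p) / 4, (n + 3 - p) % 4, by omega, by omega, by omega, by omega⟩
  obtain ⟨i, j, hi, hj, hext⟩ :=
    ih k hk hk' (if b = 3 then k % 2 else (k + 1) % 2) (by split_ifs <;> omega)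
  have hbj : b = 3 ↔ ¬ 2 ∣ j := by split_ifs at hi <;> omega
  have := hext.pos
  exact ⟨4 * i - p, 4 * j + b, by omega, by omega, hext.extension hp hb hbj⟩

theorem hasExtendable {n : ℕ} (hn : 5 ≤ n) : ∀ p < 2, HasExtendable n p := by
  induction n using Nat.strong_induction_on with
  | _ n ih =>
    intro p hp
    by_cases hn' : n < 20
    · exact hasExtendable_of_lt hn hn' hp
    · exact hasExtendable_of_div_four hp fun k _ _ => ih k (by omega) (by omega)

theorem exists_unbordered_rudinShapiro {n : ℕ} (hn : 1 ≤ n) :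
    ∃ i j, j + 1 = i + n ∧ Unbordered rudinShapiro i j := by
  by_cases hn' : n < 5
  · have hsearch : ∀ n < 5, 1 ≤ n → ∃ i < 3, Unbordered rudinShapiro i (i + n - 1) := by
      decide +kernel
    obtain ⟨i, -, hunb⟩ := hsearch n hn' hn
    exact ⟨i, i + n - 1, by omega, hunb⟩
  · obtain ⟨i, j, -, hj, hext⟩ := hasExtendable (not_lt.mp hn') 0 two_pos
    exact ⟨i, j, hj, hext.unbordered⟩

theorem rudinShapiro_leastPeriod (n : ℕ) (hn : 1 ≤ n) :
    LeastPeriod rudinShapiro n := by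
  obtain ⟨i, j, hj, hunb⟩ := exists_unbordered_rudinShapiro hn
  exact hunb.leastPeriod (by omega) hj
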